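/- Let H be an Arf numerical semigroup. Then H is both irreducible and Arf-irreducible if and only if H is one of the following: the numerical semigroup generated by {3, 4, 5}, the numerical semigroup generated by {3, 5, 7}, or the numerical semigroup generated by {2, m} for some odd m ≥ 1. -/

import Mathlib

/-!
Every Arf numerical semigroup is a numerical semigroup, so an irreducible Arf semigroup is
automatically Arf-irreducible, and the claim is about irreducibility alone.

An irreducible `H ≠ ℕ` with largest gap `F` is symmetric or pseudo-symmetric: `F - x ∈ H` for every
gap `x` with `2 * x ≠ F` (`sub_mem_of_irreducible`). The Arf property forbids two consecutive
elements of `H` just below `F`, since `F - 2, F - 1 ∈ H` would give `2 * (F - 1) - (F - 2) = F ∈ H`.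
For `F ≥ 2`, the symmetry says that `F - 1 ∈ H` unless `F = 2`, and the Arf property then that `F - 2`
is a gap, so `2 ∈ H` unless `F = 4`. The cases `F = 2`, `F = 4` and `2 ∈ H` (which covers `F = 1`)
give the three families, and `H = ℕ` is generated by `{2, 1}`.

Conversely, every semigroup strictly containing one of the listed `H ≠ ℕ` contains its largest gap,
so `H` is not the intersection of two of them (`irreducible_of_forced_gap`).
-/

/-- A numerical semigroup: a subset of ℕ containing 0, closed under addition,
with finite complement. -/
def IsNumericalSemigroup (H : Set ℕ) : Prop :=
  0 ∈ H ∧ (∀ a ∈ H, ∀ b ∈ H, a + b ∈ H) ∧ (Hᶜ : Set ℕ).Finite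

/-- An Arf numerical semigroup: for all a ≥ b ≥ c in H, a + b - c ∈ H. -/
def IsArfSemigroup (H : Set ℕ) : Prop :=
  IsNumericalSemigroup H ∧
    ∀ a ∈ H, ∀ b ∈ H, ∀ c ∈ H, c ≤ b → b ≤ a → a + b - c ∈ H

/-- The special gaps of H. -/
def SpecialGaps (H : Set ℕ) : Set ℕ :=
  {x | x ∉ H ∧ IsNumericalSemigroup (H ∪ {x})}

/-- The Arf special gaps of H. -/
def ArfSpecialGaps (H : Set ℕ) : Set ℕ :=
  {x | x ∉ H ∧ IsArfSemigroup (H ∪ {x})}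

/-- The Frobenius number of H (the largest gap; meaningful when H ≠ ℕ). -/
noncomputable def Frobenius (H : Set ℕ) : ℕ := sSup Hᶜ

/-- An irreducible numerical semigroup. -/
def IsIrreducibleNS (H : Set ℕ) : Prop :=
  IsNumericalSemigroup H ∧
    ¬ ∃ H₁ H₂ : Set ℕ, IsNumericalSemigroup H₁ ∧ IsNumericalSemigroup H₂ ∧
      H ⊂ H₁ ∧ H ⊂ H₂ ∧ H = H₁ ∩ H₂

/-- An Arf-irreducible numerical semigroup. -/
def ArfIrreducible (H : Set ℕ) : Prop :=
  IsArfSemigroup H ∧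
    ¬ ∃ H₁ H₂ : Set ℕ, IsArfSemigroup H₁ ∧ IsArfSemigroup H₂ ∧
      H ⊂ H₁ ∧ H ⊂ H₂ ∧ H = H₁ ∩ H₂

/-- The set of Arf numerical semigroups containing H. -/
def ArfOver (H : Set ℕ) : Set (Set ℕ) := {S | IsArfSemigroup S ∧ H ⊆ S}

/-- The set of Arf-irreducible numerical semigroups containing H. -/
def QA (H : Set ℕ) : Set (Set ℕ) := {S | ArfIrreducible S ∧ H ⊆ S}

/-- A variety of numerical semigroups. -/
def IsVariety (Ψ : Set (Set ℕ)) : Prop :=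
  Ψ.Nonempty ∧ (∀ S ∈ Ψ, IsNumericalSemigroup S) ∧
    (∀ S ∈ Ψ, ∀ S' : Set ℕ, IsNumericalSemigroup S' → S ⊆ S' → S' ∈ Ψ) ∧
    (∀ S ∈ Ψ, ∀ S' ∈ Ψ, S ∩ S' ∈ Ψ)

/-- The variety generated by a family of numerical semigroups. -/
def GeneratedVariety (F : Set (Set ℕ)) : Set (Set ℕ) :=
  ⋂₀ {Ψ | IsVariety Ψ ∧ F ⊆ Ψ}

theorem coe_closure_345 :
    (↑(AddSubmonoid.closure ({3, 4, 5} : Set ℕ)) : Set ℕ) = {n | n = 0 ∨ 3 ≤ n} := by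
  ext n
  simp only [SetLike.mem_coe, Set.mem_ofPred_eq]
  constructor
  · intro h
    induction h using AddSubmonoid.closure_induction with
    | mem x hx =>
      simp only [Set.mem_insert_iff, Set.mem_singleton_iff] at hx
      omega
    | zero => omega
    | add x y _ _ hx hy => omega
  · have h3 : 3 ∈ AddSubmonoid.closure ({3, 4, 5} : Set ℕ) :=
      AddSubmonoid.subset_closure (by simp)
    have h4 : 4 ∈ AddSubmonoid.closure ({3, 4, 5} : Set ℕ) :=
      AddSubmonoid.subset_closure (by simp)
    have h5 : 5 ∈ AddSubmonoid.closure ({3, 4, 5} : Set ℕ) :=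
      AddSubmonoid.subset_closure (by simp)
    induction n using Nat.strong_induction_on with
    | _ n ih =>
      intro h
      by_cases h0 : n = 0
      · subst h0; exact zero_mem _
      by_cases hn : n < 6
      · obtain rfl | rfl | rfl : n = 3 ∨ n = 4 ∨ n = 5 := by omega
        exacts [h3, h4, h5]
      · have := add_mem (ih (n - 3) (by omega) (by omega)) h3
        rwa [Nat.sub_add_cancel (by omega)] at this

theorem coe_closure_357 :
    (↑(AddSubmonoid.closure ({3, 5, 7} : Set ℕ)) : Set ℕ) = {n | n = 0 ∨ n = 3 ∨ 5 ≤ n} := by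
  ext n
  simp only [SetLike.mem_coe, Set.mem_ofPred_eq]
  constructor
  · intro h
    induction h using AddSubmonoid.closure_induction with
    | mem x hx =>
      simp only [Set.mem_insert_iff, Set.mem_singleton_iff] at hx
      omega
    | zero => omega
    | add x y _ _ hx hy => omega
  · have h3 : 3 ∈ AddSubmonoid.closure ({3, 5, 7} : Set ℕ) :=
      AddSubmonoid.subset_closure (by simp)
    have h5 : 5 ∈ AddSubmonoid.closure ({3, 5, 7} : Set ℕ) :=
      AddSubmonoid.subset_closure (by simp)
    have h7 : 7 ∈ AddSubmonoid.closure ({3, 5, 7} : Set ℕ) :=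
      AddSubmonoid.subset_closure (by simp)
    induction n using Nat.strong_induction_on with
    | _ n ih =>
      intro h
      by_cases h0 : n = 0
      · subst h0; exact zero_mem _
      by_cases hn : n = 3 ∨ n = 5 ∨ n = 7
      · obtain rfl | rfl | rfl := hn
        exacts [h3, h5, h7]
      · have := add_mem (ih (n - 3) (by omega) (by omega)) h3
        rwa [Nat.sub_add_cancel (by omega)] at this

theorem coe_closure_two_odd {m : ℕ} (hm : Odd m) :
    (↑(AddSubmonoid.closure ({2, m} : Set ℕ)) : Set ℕ) = {n | n % 2 = 0 ∨ m ≤ n} := by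
  have hm2 : m % 2 = 1 := Nat.odd_iff.mp hm
  ext n
  simp only [SetLike.mem_coe, Set.mem_ofPred_eq]
  constructor
  · intro h
    induction h using AddSubmonoid.closure_induction with
    | mem x hx =>
      simp only [Set.mem_insert_iff, Set.mem_singleton_iff] at hx
      omega
    | zero => omega
    | add x y _ _ hx hy => omega
  · have h2 : 2 ∈ AddSubmonoid.closure ({2, m} : Set ℕ) :=
      AddSubmonoid.subset_closure (by simp)
    have hmm : m ∈ AddSubmonoid.closure ({2, m} : Set ℕ) :=
      AddSubmonoid.subset_closure (by simp)
    induction n using Nat.strong_induction_on with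
    | _ n ih =>
      intro h
      by_cases h0 : n = 0
      · subst h0; exact zero_mem _
      by_cases hn : n = m
      · rwa [hn]
      · have := add_mem (ih (n - 2) (by omega) (by omega)) h2
        rwa [Nat.sub_add_cancel (by omega)] at this

/-- If one gap `F` belongs to every strictly larger numerical semigroup, it belongs to every
intersection of two of them, so `H` is irreducible. -/
theorem irreducible_of_forced_gap {H : Set ℕ} (hH : IsNumericalSemigroup H) {F : ℕ} (hF : F ∉ H)
    (h : ∀ T, IsNumericalSemigroup T → H ⊆ T → ∀ x ∈ T, x ∉ H → F ∈ T) : IsIrreducibleNS H := by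
  refine ⟨hH, ?_⟩
  rintro ⟨H₁, H₂, n₁, n₂, s₁, s₂, e⟩
  obtain ⟨x, hx, hxH⟩ := Set.exists_of_ssubset s₁
  obtain ⟨y, hy, hyH⟩ := Set.exists_of_ssubset s₂
  apply hF
  rw [e]
  exact ⟨h H₁ n₁ s₁.subset x hx hxH, h H₂ n₂ s₂.subset y hy hyH⟩

/-- Adjoining a gap `x` preserves being a numerical semigroup as soon as the sums involving `x`
stay inside. -/
theorem isNumericalSemigroup_union {H : Set ℕ} (hH : IsNumericalSemigroup H) {x : ℕ}
    (hadd : ∀ h ∈ H, h ≠ 0 → x + h ∈ H) (hdbl : x + x ∈ H) :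
    IsNumericalSemigroup (H ∪ {x}) := by
  have hx : ∀ h ∈ H, x + h ∈ H ∪ {x} := by
    intro h hh
    by_cases h0 : h = 0
    · right; simp [h0]
    · exact Or.inl (hadd h hh h0)
  refine ⟨Or.inl hH.1, ?_, hH.2.2.subset (Set.compl_subset_compl.mpr Set.subset_union_left)⟩
  rintro a (ha | rfl) b (hb | rfl)
  · exact Or.inl (hH.2.1 a ha b hb)
  · rw [add_comm]; exact hx a ha
  · exact hx b hb
  · exact Or.inl hdbl

/-- An irreducible numerical semigroup with largest gap `F` is symmetric or pseudo-symmetric. -/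
theorem sub_mem_of_irreducible {H : Set ℕ} (hH : IsIrreducibleNS H) {F : ℕ} (hF : F ∉ H)
    (hmax : ∀ n, F < n → n ∈ H) {x : ℕ} (hx : x ∉ H) (hx2 : 2 * x ≠ F) : F - x ∈ H := by
  obtain ⟨hN, hirr⟩ := hH
  have hle : ∀ y, y ∉ H → y ≤ F := fun y hy => by
    by_contra h
    exact hy (hmax y (by omega))
  have hpos : ∀ y, y ∉ H → 0 < y := fun y hy => Nat.pos_of_ne_zero fun h => hy (h ▸ hN.1)
  by_contra hFx
  let B : Set ℕ := {y | y ∉ H ∧ F - y ∉ H ∧ F < 2 * y}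
  have hBfin : B.Finite := (Set.finite_Iic F).subset fun y hy => hle y hy.1
  -- Either `x` or its mirror image `F - x` is larger than `F / 2`.
  have hBne : B.Nonempty := by
    have := hle x hx
    rcases lt_or_gt_of_ne hx2 with h | h
    · exact ⟨F - x, hFx, by rwa [Nat.sub_sub_self this], by omega⟩
    · exact ⟨x, hx, hFx, h⟩
  obtain ⟨y, ⟨hy, hFy, hy2⟩, hymax⟩ := Set.exists_max_image B id hBfin hBne
  have hyF := hle y hy
  have hyNS : IsNumericalSemigroup (H ∪ {y}) := by
    refine isNumericalSemigroup_union hN ?_ (hmax _ (by omega))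
    intro h hh h0
    by_contra hyh
    have hyhF := hle _ hyh
    -- By maximality of `y`, `F - (y + h) ∈ H`, and adding `h` puts `F - y` in `H`.
    by_cases hm : F - (y + h) ∈ H
    · apply hFy
      have := hN.2.1 _ hm _ hh
      rwa [show F - (y + h) + h = F - y by omega] at this
    · have := hymax (y + h) ⟨hyh, hm, by omega⟩
      simp only [id] at this
      omega
  have hFNS : IsNumericalSemigroup (H ∪ {F}) := by
    have := hpos F hF
    exact isNumericalSemigroup_union hN (fun h _ h0 => hmax _ (by omega)) (hmax _ (by omega))
  have hyne : y ≠ F := by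
    rintro rfl
    apply hFy
    simpa using hN.1
  have hss : ∀ z, z ∉ H → H ⊂ H ∪ {z} := fun z hz =>
    (Set.ssubset_iff_of_subset Set.subset_union_left).mpr ⟨z, Or.inr rfl, hz⟩
  refine hirr ⟨H ∪ {y}, H ∪ {F}, hyNS, hFNS, hss y hy, hss F hF, ?_⟩
  ext z
  constructor
  · exact fun hz => ⟨Or.inl hz, Or.inl hz⟩
  · rintro ⟨hz | hz, hz' | hz'⟩
    · exact hz
    · exact hz
    · exact hz'
    · exact absurd (hz.symm.trans hz') hyne

/-- A decomposition into Arf semigroups is in particular one into numerical semigroups. -/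
theorem arfIrreducible_of_irreducible {H : Set ℕ} (hH : IsArfSemigroup H)
    (hi : IsIrreducibleNS H) : ArfIrreducible H :=
  ⟨hH, fun ⟨H₁, H₂, a₁, a₂, h⟩ => hi.2 ⟨H₁, H₂, a₁.1, a₂.1, h⟩⟩

/-- The classification of irreducible Arf semigroups, with the three families written explicitly. -/
theorem eq_of_irreducible {H : Set ℕ} (hH : IsArfSemigroup H) (hi : IsIrreducibleNS H) :
    H = {n | n = 0 ∨ 3 ≤ n} ∨ H = {n | n = 0 ∨ n = 3 ∨ 5 ≤ n} ∨
      ∃ m : ℕ, Odd m ∧ 1 ≤ m ∧ H = {n | n % 2 = 0 ∨ m ≤ n} := by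
  obtain ⟨⟨h0, hadd, hfin⟩, harf⟩ := hH
  by_cases hne : (Hᶜ).Nonempty
  swap
  · rw [Set.not_nonempty_iff_eq_empty, Set.compl_empty_iff] at hne
    refine Or.inr (Or.inr ⟨1, odd_one, le_rfl, ?_⟩)
    rw [hne]
    ext n
    simp only [Set.mem_univ, Set.mem_ofPred_eq, true_iff]
    omega
  obtain ⟨F, hF, hFmax⟩ := Set.exists_max_image Hᶜ id hfin hne
  have hmax : ∀ n, F < n → n ∈ H := by
    intro n hn
    by_contra h
    exact absurd (hFmax n h) (not_le.mpr hn)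
  have hsym : ∀ x, x ∉ H → 2 * x ≠ F → F - x ∈ H :=
    fun x => sub_mem_of_irreducible hi hF hmax
  have hFpos : 0 < F := Nat.pos_of_ne_zero fun h => hF (h ▸ h0)
  have h1 : 1 ∉ H := by
    intro h1
    have : ∀ n, n ∈ H := by
      intro n
      induction n with
      | zero => exact h0
      | succ k ih => exact hadd k ih 1 h1
    exact hF (this F)
  by_cases hF2 : F = 2
  · left
    subst hF2
    ext n
    simp only [Set.mem_ofPred_eq]
    constructor
    · intro hn
      by_contra hc
      obtain rfl | rfl : n = 1 ∨ n = 2 := by omega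
      exacts [h1 hn, hF hn]
    · rintro (rfl | hn)
      exacts [h0, hmax n (by omega)]
  by_cases h2 : 2 ∈ H
  · have hshift : ∀ k x, x ∈ H → x + 2 * k ∈ H := by
      intro k x hx
      induction k with
      | zero => exact hx
      | succ k ih => exact hadd _ ih 2 h2
    have hodd : F % 2 = 1 := by
      by_contra h
      apply hF
      have := hshift (F / 2) 0 h0
      rwa [show 0 + 2 * (F / 2) = F by omega] at this
    refine Or.inr (Or.inr ⟨F + 2, Nat.odd_iff.mpr (by omega), by omega, ?_⟩)
    ext n
    simp only [Set.mem_ofPred_eq]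
    constructor
    · intro hn
      by_contra hc
      apply hF
      have := hshift ((F - n) / 2) n hn
      rwa [show n + 2 * ((F - n) / 2) = F by omega] at this
    · rintro (hn | hn)
      · have := hshift (n / 2) 0 h0
        rwa [show 0 + 2 * (n / 2) = n by omega] at this
      · exact hmax n (by omega)
  have hF1 : F ≠ 1 := by
    rintro rfl
    exact h2 (hmax 2 (by omega))
  have hpred : F - 1 ∈ H := hsym 1 h1 (by omega)
  by_cases hF4 : F = 4
  · subst hF4
    refine Or.inr (Or.inl ?_)
    ext n
    simp only [Set.mem_ofPred_eq]
    constructor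
    · intro hn
      by_contra hc
      obtain rfl | rfl | rfl : n = 1 ∨ n = 2 ∨ n = 4 := by omega
      exacts [h1 hn, h2 hn, hF hn]
    · rintro (rfl | rfl | hn)
      exacts [h0, hpred, hmax n (by omega)]
  -- Now `F - 2` and `F - 1` are consecutive elements, so the Arf property yields `F ∈ H`.
  have hpred2 : F - 2 ∈ H := hsym 2 h2 (by omega)
  have := harf _ hpred _ hpred _ hpred2 (by omega) le_rfl
  rw [show F - 1 + (F - 1) - (F - 2) = F by omega] at this
  exact absurd this hF

/-- An Arf numerical semigroup is both irreducible and Arf-irreducible iff it is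
⟨3,4,5⟩, ⟨3,5,7⟩, or ⟨2,m⟩ with m ≥ 1 odd. -/
theorem irreducible_and_arfIrreducible_iff (H : Set ℕ) (hH : IsArfSemigroup H) :
    (IsIrreducibleNS H ∧ ArfIrreducible H) ↔
      (H = ↑(AddSubmonoid.closure ({3, 4, 5} : Set ℕ)) ∨
       H = ↑(AddSubmonoid.closure ({3, 5, 7} : Set ℕ)) ∨
       ∃ m : ℕ, Odd m ∧ 1 ≤ m ∧ H = ↑(AddSubmonoid.closure ({2, m} : Set ℕ))) := by
  rw [coe_closure_345, coe_closure_357]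
  constructor
  · rintro ⟨hi, -⟩
    obtain h | h | ⟨m, hm, hm1, h⟩ := eq_of_irreducible hH hi
    · exact Or.inl h
    · exact Or.inr (Or.inl h)
    · exact Or.inr (Or.inr ⟨m, hm, hm1, by rw [coe_closure_two_odd hm, h]⟩)
  · intro h
    suffices hi : IsIrreducibleNS H from ⟨hi, arfIrreducible_of_irreducible hH hi⟩
    obtain h | h | ⟨m, hm, hm1, h⟩ := h
    · refine irreducible_of_forced_gap hH.1 (F := 2) (by simp [h]) ?_
      intro T hT _ x hx hxH
      simp only [h, Set.mem_ofPred_eq] at hxH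
      obtain rfl | rfl : x = 1 ∨ x = 2 := by omega
      exacts [hT.2.1 1 hx 1 hx, hx]
    · refine irreducible_of_forced_gap hH.1 (F := 4) (by simp [h]) ?_
      intro T hT hsub x hx hxH
      have h3 : 3 ∈ T := hsub (by simp [h])
      simp only [h, Set.mem_ofPred_eq] at hxH
      obtain rfl | rfl | rfl : x = 1 ∨ x = 2 ∨ x = 4 := by omega
      exacts [hT.2.1 3 h3 1 hx, hT.2.1 2 hx 2 hx, hx]
    · rw [coe_closure_two_odd hm] at h
      have hm2 : m % 2 = 1 := Nat.odd_iff.mp hm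
      by_cases hm1' : m = 1
      · -- Here `H = ℕ` has no strictly larger semigroup.
        refine ⟨hH.1, ?_⟩
        rintro ⟨H₁, _, _, _, s₁, _, _⟩
        obtain ⟨x, -, hxH⟩ := Set.exists_of_ssubset s₁
        simp only [h, Set.mem_ofPred_eq] at hxH
        omega
      · have hF : m - 2 ∉ H := by
          simp only [h, Set.mem_ofPred_eq]
          omega
        refine irreducible_of_forced_gap hH.1 hF ?_
        intro T hT hsub x hx hxH
        simp only [h, Set.mem_ofPred_eq] at hxH
        -- The new element `x` is odd and at most `m - 2`, so they differ by an even number.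
        have hev : m - 2 - x ∈ T := hsub (by simp only [h, Set.mem_ofPred_eq]; omega)
        have := hT.2.1 x hx _ hev
        rwa [show x + (m - 2 - x) = m - 2 by omega] at this
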